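/- Let α = 0 and β < 1 (with β ∈ [0,1]). Let y : ℤ → Bool be an island of minuses, i.e. {i | y i = false} is finite and nonempty, and let m = max {i | y i = false}. Then the iterates F^t δ_y converge on thin cylinders, as t → ∞, to the Dirac measure at the (⊖⊕, m+1)-jump configuration, i.e. the configuration z with z i = false for all i ≤ m and z i = true for all i > m. -/

import Mathlib

/-!
When `α = 0` a minus stays a minus, a plus with a plus to its right stays a plus, and a plus with
a minus to its right survives with probability `β < 1`. Write `μ t = F^[t] δ_y`. Then

* `μ (t+1) {x i = ⊖} ≤ μ t {x i = ⊖} + μ t {x (i+1) = ⊖}`, so no minus ever appears to the right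
  of `m`;
* `μ (t+1) {x i = ⊕} ≤ β * μ t {x i = ⊕} + μ t {x (i+1) = ⊕}`, so `μ t {x m = ⊕} = 0` for all `t`
  (a minus stays a minus), and if `μ t {x (i+1) = ⊕} → 0` then also `μ t {x i = ⊕} → 0`, because
  `L := limsup μ t {x i = ⊕}` satisfies `L ≤ β L` with `β < 1`. Descending induction from `m` gives
  this for every `i ≤ m`.

Hence the probability that site `i` disagrees with the jump configuration tends to `0` for every
`i`, and a union bound over the finitely many sites of a thin cylinder concludes.
-/

open MeasureTheory Filter

namespace PCA

/-- Configuration space: `true` is ⊕ (plus), `false` is ⊖ (minus). -/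
abbrev Config : Type := ℤ → Bool

/-- Transition probabilities of the PCA. -/
def theta (α β : ℝ) : Bool → Bool → ℝ
  | false, false => 0
  | true,  false => β
  | false, true  => α
  | true,  true  => 1

/-- Thin cylinder determined by a finite set of coordinates and prescribed values. -/
def cyl (S : Finset ℤ) (a : ℤ → Bool) : Set Config := {y | ∀ i ∈ S, y i = a i}

/-- `K` is the update kernel of the PCA: from configuration `x`, all sites update
independently, site `i` becoming plus with probability `theta α β (x i) (x (i+1))`.
This pins down `K x` as the corresponding product of Bernoulli measures, via its
values on thin cylinders. -/
def IsPCAKernel (α β : ℝ) (K : Config → Measure Config) : Prop :=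
  (∀ x, IsProbabilityMeasure (K x)) ∧
  ∀ (x : Config) (S : Finset ℤ) (a : ℤ → Bool),
    K x (cyl S a) =
      ∏ i ∈ S, ENNReal.ofReal
        (if a i then theta α β (x i) (x (i + 1)) else 1 - theta α β (x i) (x (i + 1)))

/-- `F` is the PCA operator with parameters `α, β`: `F μ` is `μ` bound with the
product-Bernoulli update kernel. -/
def IsPCA (α β : ℝ) (F : Measure Config → Measure Config) : Prop :=
  ∃ K : Config → Measure Config, IsPCAKernel α β K ∧
    ∀ (μ : Measure Config) (A : Set Config), MeasurableSet A →
      F μ A = ∫⁻ x, K x A ∂μ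

/-- The configuration "all minuses". -/
def allMinus : Config := fun _ => false

/-- The configuration "all pluses". -/
def allPlus : Config := fun _ => true

/-- Convergence of a sequence of measures to `ν` on all thin cylinders. -/
def TendstoCyl (seq : ℕ → Measure Config) (ν : Measure Config) : Prop :=
  ∀ (S : Finset ℤ) (a : ℤ → Bool),
    Tendsto (fun t => seq t (cyl S a)) atTop (nhds (ν (cyl S a)))

end PCA

namespace PCA

lemma measurableSet_cyl (S : Finset ℤ) (a : ℤ → Bool) : MeasurableSet (cyl S a) := by
  have : cyl S a = ⋂ i ∈ S, (fun x : Config => x i) ⁻¹' {a i} := by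
    ext x; simp [cyl]
  rw [this]
  exact Finset.measurableSet_biInter S
    fun i _ => measurable_pi_apply i (measurableSet_singleton (a i))

/-- The event that site `i` is in state `b`. -/
def site (i : ℤ) (b : Bool) : Set Config := cyl {i} fun _ => b

lemma mem_site {i : ℤ} {b : Bool} {x : Config} : x ∈ site i b ↔ x i = b := by
  simp [site, cyl]

lemma measurableSet_site (i : ℤ) (b : Bool) : MeasurableSet (site i b) :=
  measurableSet_cyl _ _

lemma IsPCA.isProbabilityMeasure {α β : ℝ} {F : Measure Config → Measure Config}
    (hF : IsPCA α β F) (μ : Measure Config) [IsProbabilityMeasure μ] :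
    IsProbabilityMeasure (F μ) := by
  obtain ⟨K, ⟨hK, -⟩, h⟩ := hF
  refine ⟨?_⟩
  rw [h μ _ MeasurableSet.univ]
  simp

lemma IsPCA.iterate_isProbabilityMeasure {α β : ℝ} {F : Measure Config → Measure Config}
    (hF : IsPCA α β F) (μ : Measure Config) [IsProbabilityMeasure μ] (t : ℕ) :
    IsProbabilityMeasure (F^[t] μ) := by
  induction t with
  | zero => simpa
  | succ t ih =>
    rw [Function.iterate_succ_apply']
    exact hF.isProbabilityMeasure _

/-- A pointwise bound on the one-step transition probability at site `i` by a combination of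
the states of sites `i` and `i + 1` integrates to a bound on the law after one step. -/
lemma IsPCA.site_le {α β : ℝ} {F : Measure Config → Measure Config} (hF : IsPCA α β F)
    (μ : Measure Config) (i : ℤ) (b : Bool) (c d : ENNReal)
    (hcd : ∀ p q : Bool, ENNReal.ofReal (if b then theta α β p q else 1 - theta α β p q) ≤
      c * (if p = b then 1 else 0) + d * (if q = b then 1 else 0)) :
    F μ (site i b) ≤ c * μ (site i b) + d * μ (site (i + 1) b) := by
  obtain ⟨K, ⟨-, hK⟩, h⟩ := hF
  rw [h μ _ (measurableSet_site i b)]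
  calc ∫⁻ x, K x (site i b) ∂μ
      ≤ ∫⁻ x, (c * (site i b).indicator 1 x + d * (site (i + 1) b).indicator 1 x) ∂μ := by
        refine lintegral_mono fun x => ?_
        have h1 : K x (site i b) = ENNReal.ofReal
            (if b then theta α β (x i) (x (i + 1)) else 1 - theta α β (x i) (x (i + 1))) := by
          rw [site, hK, Finset.prod_singleton]
        rw [h1]
        simpa [Set.indicator, mem_site] using hcd (x i) (x (i + 1))
    _ = c * μ (site i b) + d * μ (site (i + 1) b) := by
        have hm (j : ℤ) : Measurable ((site j b).indicator (1 : Config → ENNReal)) :=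
          measurable_one.indicator (measurableSet_site j b)
        rw [lintegral_add_left ((hm i).const_mul c), lintegral_const_mul _ (hm i),
          lintegral_const_mul _ (hm (i + 1)), lintegral_indicator_one (measurableSet_site i b),
          lintegral_indicator_one (measurableSet_site (i + 1) b)]

lemma IsPCA.plus_le {β : ℝ} {F : Measure Config → Measure Config}
    (hF : IsPCA 0 β F) (μ : Measure Config) (i : ℤ) :
    F μ (site i true) ≤ ENNReal.ofReal β * μ (site i true) + μ (site (i + 1) true) := by
  have := hF.site_le μ i true (ENNReal.ofReal β) 1 (by
    intro p q
    cases p <;> cases q <;> simp [theta])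
  simpa using this

/-- A minus never turns into a plus. -/
lemma IsPCA.plus_le_self {β : ℝ} (hβ1 : β < 1) {F : Measure Config → Measure Config}
    (hF : IsPCA 0 β F) (μ : Measure Config) (i : ℤ) :
    F μ (site i true) ≤ μ (site i true) := by
  have := hF.site_le μ i true 1 0 (by
    intro p q
    cases p <;> cases q <;> simp [theta, hβ1.le])
  simpa using this

lemma IsPCA.minus_le {β : ℝ} (hβ0 : 0 ≤ β) {F : Measure Config → Measure Config}
    (hF : IsPCA 0 β F) (μ : Measure Config) (i : ℤ) :
    F μ (site i false) ≤ μ (site i false) + μ (site (i + 1) false) := by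
  have := hF.site_le μ i false 1 1 (by
    intro p q
    cases p <;> cases q <;> simp [theta, hβ0])
  simpa using this

end PCA

lemma ENNReal.tendsto_zero_of_le_mul_add {b : ENNReal} (hb : b < 1) {u v : ℕ → ENNReal}
    (hu : ∀ t, u t ≤ 1) (hv : Tendsto v atTop (nhds 0))
    (h : ∀ t, u (t + 1) ≤ b * u t + v t) : Tendsto u atTop (nhds 0) := by
  have hL1 : limsup u atTop ≤ 1 := limsup_le_of_le (h := Eventually.of_forall hu)
  have hL : limsup u atTop ≤ b * limsup u atTop := calc
    limsup u atTop = limsup (fun t => u (t + 1)) atTop := (limsup_nat_add u 1).symm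
    _ ≤ limsup ((fun t => b * u t) + v) atTop := limsup_le_limsup (Eventually.of_forall h)
    _ = limsup (fun t => b * u t) atTop := ENNReal.limsup_add_of_right_tendsto_zero hv _
    _ = b * limsup u atTop := ENNReal.limsup_const_mul_of_ne_top hb.ne_top
  have h0 : limsup u atTop = 0 := by
    by_contra hne
    have hfin : limsup u atTop ≠ ⊤ := (hL1.trans_lt ENNReal.one_lt_top).ne
    have := ENNReal.mul_lt_mul_left hne hfin hb
    simp only [one_mul] at this
    rw [mul_comm] at this
    exact absurd hL (not_le.mpr (by simpa [mul_comm] using this))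
  exact tendsto_of_le_liminf_of_limsup_le (zero_le) h0.le

namespace PCA

/-- If each single site disagrees with `z` with probability tending to `0`, then the laws
converge to `δ_z` on thin cylinders. -/
lemma tendstoCyl_dirac {ν : ℕ → Measure Config} (hν : ∀ t, IsProbabilityMeasure (ν t))
    (z : Config) (h : ∀ i, Tendsto (fun t => ν t (site i (!z i))) atTop (nhds 0)) :
    TendstoCyl ν (Measure.dirac z) := by
  intro S a
  rw [Measure.dirac_apply' _ (measurableSet_cyl S a)]
  by_cases hz : z ∈ cyl S a
  · rw [Set.indicator_of_mem hz]
    have hsum : Tendsto (fun t => 1 - ∑ i ∈ S, ν t (site i (!z i))) atTop (nhds 1) := by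
      have := tendsto_finsetSum S fun i _ => h i
      simp only [Finset.sum_const_zero] at this
      simpa using ENNReal.Tendsto.sub (tendsto_const_nhds (x := (1 : ENNReal))) this (by simp)
    refine tendsto_of_tendsto_of_tendsto_of_le_of_le hsum tendsto_const_nhds
      (fun t => ?_) (fun t => prob_le_one)
    have hc : ν t (cyl S a)ᶜ ≤ ∑ i ∈ S, ν t (site i (!z i)) := by
      refine (measure_mono fun x hx => ?_).trans (measure_biUnion_finset_le S _)
      simp only [cyl, Set.mem_compl_iff, Set.mem_ofPred_eq, not_forall] at hx
      obtain ⟨i, hi, hxi⟩ := hx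
      simp only [Set.mem_iUnion]
      refine ⟨i, hi, mem_site.mpr ?_⟩
      rw [hz i hi]
      exact Bool.eq_not.mpr hxi
    have h1 := prob_add_prob_compl (μ := ν t) (measurableSet_cyl S a)
    simp only [tsub_le_iff_right]
    rw [← h1]
    gcongr
  · rw [Set.indicator_of_notMem hz]
    simp only [cyl, Set.mem_ofPred_eq, not_forall] at hz
    obtain ⟨i, hi, hzi⟩ := hz
    refine tendsto_of_tendsto_of_tendsto_of_le_of_le tendsto_const_nhds (h i)
      (fun t => zero_le) (fun t => measure_mono fun x hx => mem_site.mpr ?_)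
    rw [hx i hi]
    exact Bool.eq_not.mpr (Ne.symm hzi)

end PCA

/-- if `α = 0`, `β < 1` and `y` is a nonempty island of minuses with
rightmost minus at `m`, then `F^t δ_y` converges on thin cylinders to the Dirac
measure at the `(⊖⊕, m+1)`-jump configuration `i ↦ (m < i)`. -/
theorem pca_island_of_minuses_to_jump (β : ℝ)
    (hβ0 : 0 ≤ β) (hβ1 : β < 1)
    (F : Measure PCA.Config → Measure PCA.Config) (hF : PCA.IsPCA 0 β F)
    (y : PCA.Config) (hy : {i : ℤ | y i = false}.Finite)
    (m : ℤ) (hm : IsGreatest {i : ℤ | y i = false} m) :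
    PCA.TendstoCyl (fun t => F^[t] (Measure.dirac y))
      (Measure.dirac (fun i => decide (m < i))) := by
  have hprob := fun t => hF.iterate_isProbabilityMeasure (Measure.dirac y) t
  have h0 (i : ℤ) (b : Bool) (hi : y i ≠ b) : Measure.dirac y (PCA.site i b) = 0 := by
    rw [Measure.dirac_apply' _ (PCA.measurableSet_site i b)]
    exact Set.indicator_of_notMem (fun h => hi (PCA.mem_site.mp h)) _
  have hright (t : ℕ) : ∀ i, m < i → F^[t] (Measure.dirac y) (PCA.site i false) = 0 := by
    induction t with
    | zero => exact fun i hi => h0 i false fun hyi => absurd (hm.2 hyi) (not_le.mpr hi)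
    | succ t ih =>
      intro i hi
      rw [Function.iterate_succ_apply']
      refine le_antisymm ((hF.minus_le hβ0 _ i).trans ?_) (zero_le)
      rw [ih i hi, ih (i + 1) (by omega), add_zero]
  have hmid (t : ℕ) : F^[t] (Measure.dirac y) (PCA.site m true) = 0 := by
    induction t with
    | zero => exact h0 m true (by have : y m = false := hm.1; simp [this])
    | succ t ih =>
      rw [Function.iterate_succ_apply']
      exact le_antisymm ((hF.plus_le_self hβ1 _ m).trans ih.le) (zero_le)
  have hleft : ∀ i ≤ m,
      Tendsto (fun t => F^[t] (Measure.dirac y) (PCA.site i true)) atTop (nhds 0) := by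
    intro i hi
    induction i, hi using Int.leInductionDown with
    | base => simp only [hmid, tendsto_const_nhds]
    | pred i hi ih =>
      refine ENNReal.tendsto_zero_of_le_mul_add (b := ENNReal.ofReal β) (by simpa using hβ1)
        (fun t => prob_le_one) ih fun t => ?_
      rw [Function.iterate_succ_apply']
      simpa using hF.plus_le (F^[t] (Measure.dirac y)) (i - 1)
  refine PCA.tendstoCyl_dirac hprob _ fun i => ?_
  by_cases hi : m < i
  · simp only [hi, decide_true, Bool.not_true, hright _ i hi, tendsto_const_nhds]
  · simpa [hi] using hleft i (not_lt.mp hi)
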